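/- Invariant construction for (Proph-Fwd) (claim at the end of Section 5.2): let (ι, τ, β) be a safety problem over S, W a witness type, and P : S → W → Prop with ι ⊆ {s | ∃ w, P s w} and P forward-preserved pointwise ((s, s') ∈ τ and P s w imply P s' w). If ψ ⊆ S × W is a safe inductive invariant of the extended problem Π^w_P, then {s ∈ S | ∃ w, P s w ∧ (s, w) ∈ ψ} is a safe inductive invariant of (ι, τ, β). -/

import Mathlib

variable {S W : Type*}

/-- The safety problem `(ι, τ, β)` is safe if there is no finite `τ`-trace from an
initial state to a bad state. -/
def IsSafe {A : Type*} (init : Set A) (tr : Set (A × A)) (bad : Set A) : Prop :=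
  ¬ ∃ (n : ℕ) (σ : ℕ → A), (∀ i < n, (σ i, σ (i + 1)) ∈ tr) ∧ σ 0 ∈ init ∧ σ n ∈ bad

/-- `P` is a sound prophecy for `(ι, τ, β)`: every finite error trace admits a witness
`w` satisfying `P` at every point of the trace. -/
def IsSoundProphecy (ι : Set S) (τ : Set (S × S)) (β : Set S) (P : S → W → Prop) : Prop :=
  ∀ (n : ℕ) (σ : ℕ → S), (∀ i < n, (σ i, σ (i + 1)) ∈ τ) → σ 0 ∈ ι → σ n ∈ β →
    ∃ w : W, ∀ i ≤ n, P (σ i) w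

/-- Initial states of the soundness problem `Π^sound_P`, over `S × Set W`. -/
def soundInit (ι : Set S) (P : S → W → Prop) : Set (S × Set W) :=
  {p | p.1 ∈ ι ∧ ∀ w, P p.1 w → w ∈ p.2}

/-- Transition relation of the soundness problem `Π^sound_P`. -/
def soundTrans (τ : Set (S × S)) (P : S → W → Prop) :
    Set ((S × Set W) × (S × Set W)) :=
  {q | (q.1.1, q.2.1) ∈ τ ∧ ∀ w, (w ∈ q.1.2 ∧ P q.1.1 w ∧ P q.2.1 w) → w ∈ q.2.2}

/-- Bad states of the soundness problem `Π^sound_P`. -/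
def soundBad (β : Set S) (P : S → W → Prop) : Set (S × Set W) :=
  {p | p.1 ∈ β ∧ ∀ w, P p.1 w → w ∉ p.2}

/-- Initial states of the extended problem `Π^w_P`, over `S × W`. -/
def extInit (ι : Set S) (P : S → W → Prop) : Set (S × W) :=
  {p | p.1 ∈ ι ∧ P p.1 p.2}

/-- Transition relation of the extended problem `Π^w_P`. -/
def extTrans (τ : Set (S × S)) (P : S → W → Prop) : Set ((S × W) × (S × W)) :=
  {q | (q.1.1, q.2.1) ∈ τ ∧ q.2.2 = q.1.2 ∧ P q.1.1 q.1.2 ∧ P q.2.1 q.2.2}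

/-- Bad states of the extended problem `Π^w_P`. -/
def extBad (β : Set S) (P : S → W → Prop) : Set (S × W) :=
  {p | p.1 ∈ β ∧ P p.1 p.2}

def IsInductiveInv {A : Type*} (init : Set A) (tr : Set (A × A)) (I : Set A) : Prop :=
  init ⊆ I ∧ ∀ s s', s ∈ I → (s, s') ∈ tr → s' ∈ I

def IsSafeInductiveInv {A : Type*} (init : Set A) (tr : Set (A × A)) (bad : Set A)
    (I : Set A) : Prop :=
  IsInductiveInv init tr I ∧ I ∩ bad = ∅

/-- `R` is a forward simulation of the transition system `(init, tr)` by `(init', tr')`: every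
initial state is related to some initial state, and every step from a related state can be matched.
Inductive invariants are pulled back along such a relation. Bad states are not part of it. -/
structure IsForwardSimulation {A B : Type*} (init : Set A) (tr : Set (A × A)) (init' : Set B)
    (tr' : Set (B × B)) (R : SetRel A B) : Prop where
  init_subset_preimage : init ⊆ R.preimage init'
  exists_step : ∀ ⦃a a' b⦄, (a, b) ∈ R → (a, a') ∈ tr → ∃ b', (b, b') ∈ tr' ∧ (a', b') ∈ R

section Simulation

variable {A B : Type*} {init : Set A} {tr : Set (A × A)} {init' : Set B} {tr' : Set (B × B)}
  {R : SetRel A B} {I : Set B}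

theorem IsInductiveInv.preimage (hI : IsInductiveInv init' tr' I)
    (hR : IsForwardSimulation init tr init' tr' R) : IsInductiveInv init tr (R.preimage I) := by
  obtain ⟨init_subset, closed⟩ := hI
  refine ⟨hR.init_subset_preimage.trans (SetRel.preimage_subset_preimage init_subset), ?_⟩
  rintro a a' ⟨b, hb, hab⟩ hstep
  obtain ⟨b', hstep', hab'⟩ := hR.exists_step hab hstep
  exact ⟨b', closed b b' hb hstep', hab'⟩

theorem disjoint_preimage_of_disjoint_image {bad : Set A} (h : Disjoint I (R.image bad)) :
    Disjoint (R.preimage I) bad := by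
  rw [Set.disjoint_left] at h ⊢
  rintro a ⟨b, hb, hab⟩ ha
  exact h hb ⟨a, ha, hab⟩

theorem IsSafeInductiveInv.preimage {bad : Set A} {bad' : Set B}
    (hI : IsSafeInductiveInv init' tr' bad' I) (hR : IsForwardSimulation init tr init' tr' R)
    (hbad : R.image bad ⊆ bad') : IsSafeInductiveInv init tr bad (R.preimage I) := by
  have hdisj : Disjoint I bad' := Set.disjoint_iff_inter_eq_empty.mpr hI.2
  exact ⟨hI.1.preimage hR,
    (disjoint_preimage_of_disjoint_image (hdisj.mono_right hbad)).inter_eq⟩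

end Simulation

/-- The relation between the states of a safety problem and those of its extension `Π^w_P`: `s` is
related to `(s, w)` for every witness `w` with `P s w`. Under the (Proph-Fwd) side conditions it is
a forward simulation, a step being matched by keeping the witness. -/
def prophecyRel (P : S → W → Prop) : SetRel S (S × W) :=
  {q | q.2.1 = q.1 ∧ P q.1 q.2.2}

section Prophecy

variable {P : S → W → Prop}

theorem mem_prophecyRel {s t : S} {w : W} : (s, t, w) ∈ prophecyRel P ↔ t = s ∧ P s w :=
  Iff.rfl

theorem preimage_prophecyRel (ψ : Set (S × W)) :
    (prophecyRel P).preimage ψ = {s | ∃ w, P s w ∧ (s, w) ∈ ψ} := by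
  ext s
  simp only [SetRel.mem_preimage, Prod.exists, mem_prophecyRel, Set.mem_ofPred_eq]
  constructor
  · rintro ⟨_, w, hψ, rfl, hP⟩
    exact ⟨w, hP, hψ⟩
  · rintro ⟨w, hP, hψ⟩
    exact ⟨s, w, hψ, rfl, hP⟩

theorem image_prophecyRel (β : Set S) : (prophecyRel P).image β = extBad β P := by
  ext ⟨s, w⟩
  simp [mem_prophecyRel, extBad]

theorem isForwardSimulation_prophecyRel {ι : Set S} {τ : Set (S × S)}
    (hinit : ι ⊆ {s | ∃ w, P s w}) (hpres : ∀ s s' w, (s, s') ∈ τ → P s w → P s' w) :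
    IsForwardSimulation ι τ (extInit ι P) (extTrans τ P) (prophecyRel P) where
  init_subset_preimage s hs := by
    obtain ⟨w, hw⟩ := hinit hs
    exact ⟨(s, w), ⟨hs, hw⟩, rfl, hw⟩
  exists_step := by
    rintro s s' ⟨t, w⟩ hst hstep
    obtain ⟨rfl, hw⟩ := mem_prophecyRel.mp hst
    have hw' : P s' w := hpres t s' w hstep hw
    exact ⟨(s', w), ⟨hstep, rfl, hw, hw'⟩, rfl, hw'⟩

end Prophecy

/-- Invariant construction for (Proph-Fwd): under the (Proph-Fwd) side conditions, if `ψ`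
is a safe inductive invariant of the extended problem `Π^w_P`, then
`{s | ∃ w, P s w ∧ (s, w) ∈ ψ}` is a safe inductive invariant of `(ι, τ, β)`. -/
theorem proph_fwd_invariant_construction (ι β : Set S) (τ : Set (S × S)) (P : S → W → Prop)
    (hinit : ι ⊆ {s | ∃ w, P s w})
    (hpres : ∀ s s' w, (s, s') ∈ τ → P s w → P s' w)
    (ψ : Set (S × W))
    (hψ : IsSafeInductiveInv (extInit ι P) (extTrans τ P) (extBad β P) ψ) :
    IsSafeInductiveInv ι τ β {s : S | ∃ w, P s w ∧ (s, w) ∈ ψ} := by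
  rw [← preimage_prophecyRel]
  exact hψ.preimage (isForwardSimulation_prophecyRel hinit hpres) (image_prophecyRel β).subset
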